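/- arXiv:2312.11390 — 6 statements merged into one kernel-verified Lean document; each statement's English description precedes it below -/
import Mathlib

section
/- Let B=(V,A,τ) be a temporal graph and r∈V. Then B is a temporal out-branching (TOB) with root r if and only if: for every v∈V\{r} there exists a temporal (r,v)-walk in B, the in-degree of r in B is 0, and the in-degree of every v∈V\{r} in B is 1 (the in-degree of v being the number of temporal arcs of B with head v). -/
open scoped Classical

universe u

/-- A temporal arc `(u, v, s, t)`: tail `u`, head `v`, starting time `s`, arrival time `t`. -/
abbrev TArc (α : Type u) := α × α × ℕ × ℕ

/-- The tail vertex of a temporal arc. -/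
def TArc.tail {α : Type u} (a : TArc α) : α := a.1

/-- The head vertex of a temporal arc. -/
def TArc.head {α : Type u} (a : TArc α) : α := a.2.1

/-- The starting time of a temporal arc. -/
def TArc.ts {α : Type u} (a : TArc α) : ℕ := a.2.2.1

/-- The arrival time of a temporal arc. -/
def TArc.ta {α : Type u} (a : TArc α) : ℕ := a.2.2.2

/-- The elapsed time of a temporal arc. -/
def TArc.el {α : Type u} (a : TArc α) : ℕ := TArc.ta a - TArc.ts a

/-- A temporal graph `(V, A, τ)`. -/
structure TempGraph (α : Type u) where
  V : Finset α
  A : Finset (TArc α)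
  τ : ℕ
  nonempty : V.Nonempty
  valid : ∀ a ∈ A, TArc.tail a ∈ V ∧ TArc.head a ∈ V ∧ TArc.tail a ≠ TArc.head a ∧
      1 ≤ TArc.ts a ∧ TArc.ts a ≤ TArc.ta a ∧ TArc.ta a ≤ τ

variable {α : Type u}

/-- `IsWalk S u v L` : `L` is the list of arcs of a temporal `(u,v)`-walk using arcs from `S`
(the trivial walk, `L = []`, requires `u = v`). -/
def IsWalk (S : Finset (TArc α)) : α → α → List (TArc α) → Prop
  | u, v, [] => u = v
  | u, v, a :: L => a ∈ S ∧ TArc.tail a = u ∧ (∀ b ∈ L.head?, TArc.ta a ≤ TArc.ts b) ∧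
      IsWalk S (TArc.head a) v L

/-- The starting time of a walk (`0` for the trivial walk). -/
def tsW (L : List (TArc α)) : ℕ := (L.map TArc.ts).headI

/-- The arrival time of a walk (`0` for the trivial walk). -/
def taW (L : List (TArc α)) : ℕ := (L.map TArc.ta).getLastD 0

/-- The duration of a walk. -/
def durW (L : List (TArc α)) : ℕ := taW L - tsW L

/-- The travelling time of a walk. -/
def ttW (L : List (TArc α)) : ℕ := (L.map TArc.el).sum

/-- The waiting time of a walk. -/
def waitW (L : List (TArc α)) : ℕ :=
  (List.zipWith (fun a b => TArc.ts b - TArc.ta a) L L.tail).sum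

/-- The final vertex of a walk starting at `u` with arc list `L`. -/
def endv (u : α) (L : List (TArc α)) : α := (L.map TArc.head).getLastD u

/-- The sequence of vertices of a walk starting at `u` with arc list `L`. -/
def verts (u : α) (L : List (TArc α)) : List α := u :: L.map TArc.head

/-- A walk is a (temporal) path when its vertices are pairwise distinct. -/
def IsPathList (u : α) (L : List (TArc α)) : Prop := (verts u L).Nodup

/-- The six optimisation criteria: earliest arrival, fastest time, latest departure,
minimum transfers, minimum waiting time, shortest travelling time. -/
inductive DistKind : Type
  | EA | FT | LD | MT | MW | ST
  deriving DecidableEq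

/-- The value of a walk for each criterion. -/
def wval : DistKind → List (TArc α) → ℕ
  | .EA, L => taW L
  | .FT, L => durW L
  | .LD, L => tsW L
  | .MT, L => L.length
  | .MW, L => waitW L
  | .ST, L => ttW L

/-- `Realizes d S u v L` : `L` is a temporal `(u,v)`-walk within `S` attaining the optimum
(minimum, or maximum for `LD`) of the criterion `d` among all temporal `(u,v)`-walks in `S`. -/
def Realizes (d : DistKind) (S : Finset (TArc α)) (u v : α) (L : List (TArc α)) : Prop :=
  IsWalk S u v L ∧ ∀ L', IsWalk S u v L' →
    if d = DistKind.LD then wval d L' ≤ wval d L else wval d L ≤ wval d L'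

/-- The distance value `d_G(u,v) ∈ ℕ∞` (`+∞` when `v` is not temporally reachable from `u`;
`LD_G(u,u) = τ + 1`). -/
noncomputable def distVal (d : DistKind) (G : TempGraph α) (u v : α) : ℕ∞ :=
  if d = DistKind.LD then
    (if u = v then ((G.τ : ℕ∞) + 1)
     else if ∃ L, IsWalk G.A u v L then
       sSup {n : ℕ∞ | ∃ L, IsWalk G.A u v L ∧ n = (tsW L : ℕ∞)}
     else ⊤)
  else sInf {n : ℕ∞ | ∃ L, IsWalk G.A u v L ∧ n = (wval d L : ℕ∞)}

/-- Every vertex of `Vs` is temporally reachable from `r` using arcs from `S`. -/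
def ReachAll (S : Finset (TArc α)) (Vs : Finset α) (r : α) : Prop :=
  ∀ v ∈ Vs, ∃ L, IsWalk S r v L

/-- `B` is a temporal out-branching (TOB) with root `r`: its arc set is a minimal set of
temporal arcs such that every vertex of `B` is temporally reachable from `r`. -/
def IsTOB (B : TempGraph α) (r : α) : Prop :=
  r ∈ B.V ∧ ReachAll B.A B.V r ∧ ∀ S ⊂ B.A, ¬ ReachAll S B.V r

/-- `B` is a temporal subgraph of `G`. -/
def IsSubgraph (B G : TempGraph α) : Prop :=
  B.V ⊆ G.V ∧ B.A ⊆ G.A ∧ B.τ ≤ G.τ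

/-- `B` is a `d`-TOB of `G` rooted at `r`. -/
def IsDTOB (d : DistKind) (G B : TempGraph α) (r : α) : Prop :=
  IsTOB B r ∧ IsSubgraph B G ∧ ∀ v ∈ B.V, distVal d B r v = distVal d G r v

/-- `B` is a spanning `d`-TOB of `G` rooted at `r`. -/
def IsSpanningDTOB (d : DistKind) (G B : TempGraph α) (r : α) : Prop :=
  IsDTOB d G B r ∧ B.V = G.V

/-- `B` is a maximum `d`-TOB of `G` rooted at `r`. -/
def IsMaxDTOB (d : DistKind) (G B : TempGraph α) (r : α) : Prop :=
  IsDTOB d G B r ∧ ∀ B', IsDTOB d G B' r → B'.V.card ≤ B.V.card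

/-- The in-degree of `v` with respect to the arc set `S`. -/
noncomputable def inDeg (S : Finset (TArc α)) (v : α) : ℕ :=
  (S.filter fun a => TArc.head a = v).card

/-- A walk in a (static) digraph with arc set `E`. -/
def IsDWalk (E : Finset (α × α)) : α → α → List (α × α) → Prop
  | u, v, [] => u = v
  | u, v, e :: L => e ∈ E ∧ e.1 = u ∧ IsDWalk E e.2 v L

/-- The digraph `(Vs, E)` is an out-branching with root `r`: every `v ∈ Vs` is the end of
a unique `(r,v)`-walk. -/
def IsOutBranching (Vs : Finset α) (E : Finset (α × α)) (r : α) : Prop :=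
  ∀ v ∈ Vs, ∃! L, IsDWalk E r v L

/-- The arc of the underlying multidigraph corresponding to a temporal arc. -/
def proj (a : TArc α) : α × α := (TArc.tail a, TArc.head a)

/-- The temporal subgraph of `G` induced by a set of vertices `Z`. -/
noncomputable def induced (G : TempGraph α) (Z : Finset α) (hne : Z.Nonempty) (hZ : Z ⊆ G.V) :
    TempGraph α where
  V := Z
  A := G.A.filter fun a => TArc.tail a ∈ Z ∧ TArc.head a ∈ Z
  τ := G.τ
  nonempty := hne
  valid := by
    intro a ha
    simp only [Finset.mem_filter] at ha
    obtain ⟨haA, h1, h2⟩ := ha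
    obtain ⟨-, -, h3, h4, h5, h6⟩ := G.valid a haA
    exact ⟨h1, h2, h3, h4, h5, h6⟩

/-- The reverse of a temporal arc with respect to lifetime `τ`. -/
def TArc.rev (τ : ℕ) (a : TArc α) : TArc α :=
  (TArc.head a, TArc.tail a, τ + 1 - TArc.ta a, τ + 1 - TArc.ts a)

/-- The reverse of a temporal graph. -/
noncomputable def TempGraph.rev (G : TempGraph α) : TempGraph α where
  V := G.V
  A := G.A.image (TArc.rev G.τ)
  τ := G.τ
  nonempty := G.nonempty
  valid := by
    intro b hb
    simp only [Finset.mem_image] at hb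
    obtain ⟨a, ha, rfl⟩ := hb
    obtain ⟨h1, h2, h3, h4, h5, h6⟩ := G.valid a ha
    refine ⟨h2, h1, Ne.symm h3, ?_, ?_, ?_⟩ <;>
      simp only [TArc.rev, TArc.tail, TArc.head, TArc.ts, TArc.ta] at * <;> omega

/-- The reverse of a temporal walk. -/
def revWalk (τ : ℕ) (L : List (TArc α)) : List (TArc α) := (L.map (TArc.rev τ)).reverse

/-- Every vertex of `Vs` temporally reaches `r` using arcs from `S`. -/
def CoReachAll (S : Finset (TArc α)) (Vs : Finset α) (r : α) : Prop :=
  ∀ v ∈ Vs, ∃ L, IsWalk S v r L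

/-- `B` is a temporal in-branching (TIB) with root `r`. -/
def IsTIB (B : TempGraph α) (r : α) : Prop :=
  r ∈ B.V ∧ CoReachAll B.A B.V r ∧ ∀ S ⊂ B.A, ¬ CoReachAll S B.V r

/-- `B` is a `d`-TIB of `G` rooted at `r`. -/
def IsDTIB (d : DistKind) (G B : TempGraph α) (r : α) : Prop :=
  IsTIB B r ∧ IsSubgraph B G ∧ ∀ v ∈ B.V, distVal d B v r = distVal d G v r

/-- `B` is a maximum `d`-TIB of `G` rooted at `r`. -/
def IsMaxDTIB (d : DistKind) (G B : TempGraph α) (r : α) : Prop :=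
  IsDTIB d G B r ∧ ∀ B', IsDTIB d G B' r → B'.V.card ≤ B.V.card

/-- The reverse of a temporal subgraph, with respect to the ambient lifetime `τ`. -/
noncomputable def revSub (τ : ℕ) (B : TempGraph α) (h : B.τ ≤ τ) : TempGraph α where
  V := B.V
  A := B.A.image (TArc.rev τ)
  τ := τ
  nonempty := B.nonempty
  valid := by
    intro b hb
    simp only [Finset.mem_image] at hb
    obtain ⟨a, ha, rfl⟩ := hb
    obtain ⟨h1, h2, h3, h4, h5, h6⟩ := B.valid a ha
    refine ⟨h2, h1, Ne.symm h3, ?_, ?_, ?_⟩ <;>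
      simp only [TArc.rev, TArc.tail, TArc.head, TArc.ts, TArc.ta] at * <;> omega

/-- `L` (a walk from `u`) is `d`-prefix-optimal: every prefix of it realizes the distance `d`
from `u` to the end vertex of the prefix. -/
def PrefixOptimal (d : DistKind) (S : Finset (TArc α)) (u : α) (L : List (TArc α)) : Prop :=
  ∀ h ≤ L.length, Realizes d S u (endv u (L.take h)) (L.take h)

/-- `EAd_G(u,v)`: the minimum arrival time among the walks realizing `d_G(u,v)`. -/
noncomputable def eaVal (d : DistKind) (G : TempGraph α) (u v : α) : ℕ∞ :=
  sInf {n : ℕ∞ | ∃ L, Realizes d G.A u v L ∧ n = (taW L : ℕ∞)}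

/-- `G'` is a `d`-temporal out-spanning subgraph (d-TOSS) with root `r` of `G`. -/
def IsDTOSS (d : DistKind) (G G' : TempGraph α) (r : α) : Prop :=
  IsSubgraph G' G ∧ G'.V = G.V ∧
    ∀ v ∈ G.V, ∃ L, IsWalk G'.A r v L ∧ Realizes d G.A r v L

/-- Satisfiability of a CNF formula given by the positive/negative occurrence sets
of its clauses. -/
def Satisfiable (n m : ℕ) (pos neg : Fin m → Finset (Fin n)) : Prop :=
  ∃ σ : Fin n → Bool, ∀ j : Fin m, (∃ i ∈ pos j, σ i = true) ∨ ∃ i ∈ neg j, σ i = false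

/-- `ReachedAt S r n v t` : some temporal walk with `n` arcs of `S` goes from `r` to `v` and
arrives at time `t` (with `t = 0` for the trivial walk). -/
inductive ReachedAt (S : Finset (TArc α)) (r : α) : ℕ → α → ℕ → Prop
  | nil : ReachedAt S r 0 r 0
  | snoc {n : ℕ} {t : ℕ} (a : TArc α) (h : ReachedAt S r n (TArc.tail a) t) (ha : a ∈ S)
      (hta : t ≤ TArc.ts a) : ReachedAt S r (n + 1) (TArc.head a) (TArc.ta a)

theorem ReachedAt.append {S : Finset (TArc α)} {r v : α} (L : List (TArc α)) :
    ∀ {n : ℕ} {u : α} {t : ℕ}, ReachedAt S r n u t → (∀ b ∈ L.head?, t ≤ TArc.ts b) →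
      IsWalk S u v L → ∃ m s, ReachedAt S r m v s := by
  induction L with
  | nil =>
    intro n u t h _ hw
    obtain rfl : u = v := hw
    exact ⟨n, t, h⟩
  | cons a L ih =>
    intro n u t h ht hw
    obtain ⟨ha, rfl, hL, hw⟩ := hw
    exact ih (h.snoc a ha (ht a rfl)) hL hw

theorem IsWalk.snoc {S : Finset (TArc α)} {a : TArc α} (ha : a ∈ S) (L : List (TArc α)) :
    ∀ {u : α}, IsWalk S u (TArc.tail a) L → (∀ b ∈ L.getLast?, TArc.ta b ≤ TArc.ts a) →
      IsWalk S u (TArc.head a) (L ++ [a]) := by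
  induction L with
  | nil =>
    intro u hw _
    obtain rfl : u = TArc.tail a := hw
    exact ⟨ha, rfl, by simp, rfl⟩
  | cons c L ih =>
    intro u hw hlast
    obtain ⟨hc, hu, hL, hw⟩ := hw
    cases L with
    | nil => exact ⟨hc, hu, by simpa using hlast, ih hw (by simp)⟩
    | cons d L => exact ⟨hc, hu, by simpa using hL, ih hw (by simpa using hlast)⟩

theorem ReachedAt.exists_isWalk {S : Finset (TArc α)} {r v : α} {n t : ℕ}
    (h : ReachedAt S r n v t) :
    ∃ L, IsWalk S r v L ∧ ∀ b ∈ L.getLast?, TArc.ta b = t := by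
  induction h with
  | nil => exact ⟨[], rfl, by simp⟩
  | snoc a _ ha hta ih =>
    obtain ⟨L, hL, hlast⟩ := ih
    exact ⟨L ++ [a], IsWalk.snoc ha L hL fun b hb => (hlast b hb).trans_le hta, by simp⟩

theorem exists_isWalk_iff_reachedAt {S : Finset (TArc α)} {r v : α} :
    (∃ L, IsWalk S r v L) ↔ ∃ n t, ReachedAt S r n v t :=
  ⟨fun ⟨L, hL⟩ => ReachedAt.nil.append L (by simp) hL,
    fun ⟨_, _, h⟩ => h.exists_isWalk.imp fun _ => And.left⟩

theorem ReachedAt.exists_mem_head_eq {S : Finset (TArc α)} {r v : α} {n t : ℕ}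
    (h : ReachedAt S r n v t) (hv : v ≠ r) : ∃ a ∈ S, TArc.head a = v := by
  cases h with
  | nil => exact absurd rfl hv
  | snoc a _ ha _ => exact ⟨a, ha, rfl⟩

/-- Walks lexicographically smaller, in (arrival time, length), than every walk reaching `v`
use no arc with head `v`. -/
theorem ReachedAt.of_lex_lt {A S : Finset (TArc α)} {r v w : α} {n t m s : ℕ}
    (hA : ∀ c ∈ A, TArc.ts c ≤ TArc.ta c) (hS : ∀ c ∈ A, TArc.head c ≠ v → c ∈ S)
    (ht : ∀ n' t', ReachedAt A r n' v t' → t ≤ t') (hn : ∀ n', ReachedAt A r n' v t → n ≤ n')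
    (h : ReachedAt A r m w s) (hlt : s < t ∨ s = t ∧ m < n) : ReachedAt S r m w s := by
  induction h with
  | nil => exact .nil
  | @snoc k q c h hc hq ih =>
    have := hA c hc
    refine (ih (by omega)).snoc c (hS c hc ?_) hq
    rintro rfl
    have hr := h.snoc c hc hq
    have := ht _ _ hr
    rcases hlt with hlt | ⟨rfl, hlt⟩
    · omega
    · have := hn _ hr
      omega

/-- If `S` retains every arc of `A` not entering `v`, and reaches `v` as early as `A` does, then
`S` reaches every vertex as early as `A` does. -/
theorem ReachedAt.of_earliest {A S : Finset (TArc α)} {r v w : α} {n t m s : ℕ}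
    (hS : ∀ c ∈ A, TArc.head c ≠ v → c ∈ S) (hv : ReachedAt S r n v t)
    (ht : ∀ n' t', ReachedAt A r n' v t' → t ≤ t') (h : ReachedAt A r m w s) :
    ∃ m' s', s' ≤ s ∧ ReachedAt S r m' w s' := by
  induction h with
  | nil => exact ⟨0, 0, le_rfl, .nil⟩
  | snoc c h hc hq ih =>
    by_cases hcv : TArc.head c = v
    · subst hcv
      exact ⟨n, t, ht _ _ (h.snoc c hc hq), hv⟩
    · obtain ⟨m', s', hs, h'⟩ := ih
      exact ⟨_, _, le_rfl, h'.snoc c (hS c hc hcv) (hs.trans hq)⟩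

/-- In a TOB, a set of arcs that retains every arc not entering `v` and reaches `v` as early as
possible is the whole arc set. -/
theorem IsTOB.eq_of_earliest {B : TempGraph α} {r v : α} {n t : ℕ} {S : Finset (TArc α)}
    (hB : IsTOB B r) (hSA : S ⊆ B.A) (hS : ∀ c ∈ B.A, TArc.head c ≠ v → c ∈ S)
    (hv : ReachedAt S r n v t) (ht : ∀ n' t', ReachedAt B.A r n' v t' → t ≤ t') : S = B.A := by
  by_contra hne
  refine hB.2.2 S (hSA.ssubset_of_ne hne) fun w hw => ?_
  obtain ⟨_, _, h⟩ := exists_isWalk_iff_reachedAt.1 (hB.2.1 w hw)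
  obtain ⟨m, s, -, h'⟩ := ReachedAt.of_earliest hS hv ht h
  exact exists_isWalk_iff_reachedAt.2 ⟨m, s, h'⟩

theorem IsTOB.inDeg_root {B : TempGraph α} {r : α} (hB : IsTOB B r) : inDeg B.A r = 0 := by
  have h := hB.eq_of_earliest (v := r) (S := B.A.filter fun c => TArc.head c ≠ r)
    (Finset.filter_subset _ _) (fun c hc hcr => Finset.mem_filter.2 ⟨hc, hcr⟩) .nil
    (fun _ _ _ => Nat.zero_le _)
  rw [inDeg, Finset.card_eq_zero, Finset.filter_eq_empty_iff]
  exact Finset.filter_eq_self.1 h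

theorem IsTOB.inDeg_of_ne_root {B : TempGraph α} {r v : α} (hB : IsTOB B r) (hvV : v ∈ B.V)
    (hv : v ≠ r) : inDeg B.A v = 1 := by
  have hex : ∃ t n, ReachedAt B.A r n v t :=
    exists_comm.1 (exists_isWalk_iff_reachedAt.1 (hB.2.1 v hvV))
  obtain ⟨t, hext, ht⟩ : ∃ t, (∃ n, ReachedAt B.A r n v t) ∧
      ∀ n' t', ReachedAt B.A r n' v t' → t ≤ t' :=
    ⟨Nat.find hex, Nat.find_spec hex, fun n' _ h => Nat.find_min' hex ⟨n', h⟩⟩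
  obtain ⟨n, h, hn⟩ : ∃ n, ReachedAt B.A r n v t ∧ ∀ n', ReachedAt B.A r n' v t → n ≤ n' :=
    ⟨Nat.find hext, Nat.find_spec hext, fun _ h => Nat.find_min' hext h⟩
  cases h with
  | nil => exact absurd rfl hv
  | @snoc k q a h ha hq =>
    have hA : ∀ c ∈ B.A, TArc.ts c ≤ TArc.ta c := fun c hc => (B.valid c hc).2.2.2.2.1
    set S := B.A.filter fun c => TArc.head c = TArc.head a → c = a
    have hS : ∀ c ∈ B.A, TArc.head c ≠ TArc.head a → c ∈ S := fun c hc hca =>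
      Finset.mem_filter.2 ⟨hc, fun h => absurd h hca⟩
    have haS : a ∈ S := Finset.mem_filter.2 ⟨ha, fun _ => rfl⟩
    have hlt : q < TArc.ta a ∨ q = TArc.ta a ∧ k < k + 1 := by
      have := hA a ha
      omega
    have hSB := hB.eq_of_earliest (Finset.filter_subset _ _) hS
      ((h.of_lex_lt hA hS ht hn hlt).snoc a haS hq) ht
    rw [inDeg, Finset.card_eq_one]
    refine ⟨a, Finset.eq_singleton_iff_unique_mem.2 ⟨Finset.mem_filter.2 ⟨ha, rfl⟩, ?_⟩⟩
    intro c hc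
    obtain ⟨hcA, hca⟩ := Finset.mem_filter.1 hc
    exact Finset.filter_eq_self.1 hSB c hcA hca

theorem isTOB_of_inDeg {B : TempGraph α} {r : α} (hr : r ∈ B.V)
    (hreach : ∀ v ∈ B.V, v ≠ r → ∃ L, IsWalk B.A r v L) (hroot : inDeg B.A r = 0)
    (hdeg : ∀ v ∈ B.V, v ≠ r → inDeg B.A v = 1) : IsTOB B r := by
  refine ⟨hr, fun v hv => ?_, fun S hS hSr => ?_⟩
  · by_cases hvr : v = r
    · exact ⟨[], hvr.symm⟩
    · exact hreach v hv hvr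
  · obtain ⟨a, ha, haS⟩ := Finset.exists_of_ssubset hS
    have hav : TArc.head a ∈ B.V := (B.valid a ha).2.1
    have har : TArc.head a ≠ r := by
      rw [inDeg, Finset.card_eq_zero, Finset.filter_eq_empty_iff] at hroot
      exact hroot ha
    obtain ⟨_, _, h⟩ := exists_isWalk_iff_reachedAt.1 (hSr _ hav)
    obtain ⟨b, hb, hba⟩ := h.exists_mem_head_eq har
    have hba' : b = a := Finset.card_le_one.1 (hdeg _ hav har).le b
      (Finset.mem_filter.2 ⟨hS.subset hb, hba⟩) a (Finset.mem_filter.2 ⟨ha, rfl⟩)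
    exact haS (hba' ▸ hb)

/-- Lemma `lem:tob`, 1 ⟺ 2: a temporal graph `B` with `r ∈ V` is a TOB with
root `r` iff every `v ∈ V \ {r}` is temporally reachable from `r` in `B`, the in-degree of `r`
is `0` and the in-degree of every `v ∈ V \ {r}` is `1`. -/
theorem stmt_0 {α : Type u} (B : TempGraph α) (r : α) (hr : r ∈ B.V) :
    IsTOB B r ↔
      ((∀ v ∈ B.V, v ≠ r → ∃ L, IsWalk B.A r v L) ∧
        inDeg B.A r = 0 ∧ ∀ v ∈ B.V, v ≠ r → inDeg B.A v = 1) := by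
  exact ⟨fun h => ⟨fun v hv _ => h.2.1 v hv, h.inDeg_root, fun _ => h.inDeg_of_ne_root⟩,
    fun ⟨hreach, hroot, hdeg⟩ => isTOB_of_inDeg hr hreach hroot hdeg⟩
end

section
/- Let B=(V,A,τ) be a temporal graph, r∈V, and D its underlying multidigraph (vertex set V, one arc per temporal arc with the same tail and head). Then B is a temporal out-branching (TOB) with root r if and only if: distinct temporal arcs of B have distinct (tail,head) pairs (i.e. D is a digraph), D is an out-branching with root r, and for every v∈V\{r} the unique (r,v)-walk in D is a temporal walk in B and is the unique temporal (r,v)-walk in B. -/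
open scoped Classical

universe u

variable {α : Type u}

/-- A temporal walk is extended at its end by an arc that starts after the walk has arrived. -/
lemma isWalk_concat (S : Finset (TArc α)) (a : TArc α) (v : α) (L : List (TArc α)) (u : α) :
    IsWalk S u v (L ++ [a]) ↔
      IsWalk S u (TArc.tail a) L ∧ taW L ≤ TArc.ts a ∧ a ∈ S ∧ TArc.head a = v := by
  induction L generalizing u with
  | nil => simp [IsWalk, taW]; tauto
  | cons b L ih =>
    cases L with
    | nil => simp [IsWalk, taW]; tauto
    | cons c L =>
      have h := ih (TArc.head b)
      have e : taW (b :: c :: L) = taW (c :: L) := by simp [taW]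
      rw [e, List.cons_append, IsWalk, h]
      simp only [IsWalk, List.cons_append, List.head?_cons]
      tauto

lemma taW_concat (L : List (TArc α)) (a : TArc α) : taW (L ++ [a]) = TArc.ta a := by
  simp [taW]

lemma isDWalk_concat (E : Finset (α × α)) (e : α × α) (v : α) (M : List (α × α)) (u : α) :
    IsDWalk E u v (M ++ [e]) ↔ IsDWalk E u e.1 M ∧ e ∈ E ∧ e.2 = v := by
  induction M generalizing u with
  | nil => simp [IsDWalk]; tauto
  | cons f M ih => simp [IsDWalk, ih, and_assoc]

lemma IsWalk.mono {S T : Finset (TArc α)} (h : S ⊆ T) {u v : α} {L : List (TArc α)}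
    (hL : IsWalk S u v L) : IsWalk T u v L := by
  induction L generalizing u with
  | nil => exact hL
  | cons a L ih => exact ⟨h hL.1, hL.2.1, hL.2.2.1, ih hL.2.2.2⟩

lemma IsWalk.mem {S : Finset (TArc α)} {u v : α} {L : List (TArc α)}
    (hL : IsWalk S u v L) {a : TArc α} (ha : a ∈ L) : a ∈ S := by
  induction L generalizing u with
  | nil => simp at ha
  | cons b L ih =>
    rcases List.mem_cons.1 ha with rfl | ha
    · exact hL.1
    · exact ih hL.2.2.2 ha

lemma IsWalk.isDWalk {S : Finset (TArc α)} {u v : α} {L : List (TArc α)}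
    (hL : IsWalk S u v L) : IsDWalk (S.image proj) u v (L.map proj) := by
  induction L generalizing u with
  | nil => exact hL
  | cons a L ih => exact ⟨Finset.mem_image_of_mem _ hL.1, hL.2.1, ih hL.2.2.2⟩

lemma IsWalk.eq_of_map_proj_eq {S : Finset (TArc α)} (hproj : (S : Set (TArc α)).InjOn proj)
    {u v u' v' : α} {L L' : List (TArc α)} (hL : IsWalk S u v L) (hL' : IsWalk S u' v' L')
    (h : L.map proj = L'.map proj) : L = L' := by
  induction L generalizing u u' L' with
  | nil => simpa [eq_comm] using h
  | cons a L ih =>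
    cases L' with
    | nil => simp at h
    | cons b L' =>
      rw [List.map_cons, List.map_cons, List.cons.injEq] at h
      rw [hproj hL.1 hL'.1 h.1, ih hL.2.2.2 hL'.2.2.2 h.2]

/-- If heads determine arcs and no arc enters `r`, then static walks from `r` are determined
by their end. -/
lemma IsDWalk.unique {E : Finset (α × α)} {r : α} (hroot : ∀ e ∈ E, e.2 ≠ r)
    (hinj : ∀ e ∈ E, ∀ f ∈ E, e.2 = f.2 → e = f) {v : α} {M N : List (α × α)}
    (hM : IsDWalk E r v M) (hN : IsDWalk E r v N) : M = N := by
  induction M using List.reverseRecOn generalizing v N with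
  | nil =>
    obtain rfl : r = v := hM
    rcases List.eq_nil_or_concat N with rfl | ⟨N, f, rfl⟩
    · rfl
    · rw [List.concat_eq_append, isDWalk_concat] at hN
      exact absurd hN.2.2 (hroot f hN.2.1)
  | append_singleton M e ih =>
    rw [isDWalk_concat] at hM
    rcases List.eq_nil_or_concat N with rfl | ⟨N, f, rfl⟩
    · obtain rfl : r = v := hN
      exact absurd hM.2.2 (hroot e hM.2.1)
    · rw [List.concat_eq_append, isDWalk_concat] at hN
      obtain rfl := hinj e hM.2.1 f hN.2.1 (hM.2.2.trans hN.2.2.symm)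
      rw [ih hM.1 hN.1, List.concat_eq_append]

/-- Keeping, for every vertex, only the last arc of an earliest-arrival walk with fewest arcs
preserves reachability from the root. -/
lemma exists_reachAll_subset (B : TempGraph α) (r : α) (h : ReachAll B.A B.V r) :
    ∃ S ⊆ B.A, (∀ a ∈ S, TArc.head a ≠ r) ∧
      (∀ a ∈ S, ∀ b ∈ S, TArc.head a = TArc.head b → a = b) ∧ ReachAll S B.V r := by
  let m : List (TArc α) → ℕ ×ₗ ℕ := fun L => toLex (taW L, L.length)
  have hopt : ∀ v, ∃ L, v ∈ B.V → IsWalk B.A r v L ∧ ∀ L', IsWalk B.A r v L' → m L ≤ m L' := by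
    intro v
    by_cases hv : v ∈ B.V
    · obtain ⟨L, hL, hmin⟩ :=
        (InvImage.wf m wellFounded_lt).has_min {L | IsWalk B.A r v L} (h v hv)
      exact ⟨L, fun _ => ⟨hL, fun L' hL' => not_lt.1 (hmin L' hL')⟩⟩
    · exact ⟨[], fun hv' => absurd hv' hv⟩
  choose opt hopt using hopt
  refine ⟨B.A.filter fun a => TArc.head a ≠ r ∧ (opt (TArc.head a)).getLast? = some a,
    Finset.filter_subset _ _, fun a ha => (Finset.mem_filter.1 ha).2.1, ?_, ?_⟩
  · intro a ha b hb hab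
    have ha := (Finset.mem_filter.1 ha).2.2
    rw [hab, (Finset.mem_filter.1 hb).2.2] at ha
    exact (Option.some.inj ha).symm
  · suffices H : ∀ v, v ∈ B.V → ∃ L, IsWalk (B.A.filter fun a => TArc.head a ≠ r ∧
        (opt (TArc.head a)).getLast? = some a) r v L ∧ taW L ≤ taW (opt v) from
      fun v hv => (H v hv).imp fun _ hL => hL.1
    intro v
    induction v using (InvImage.wf (fun v => m (opt v)) wellFounded_lt).induction with
    | _ v ih =>
    intro hv
    by_cases hvr : v = r
    · exact ⟨[], hvr.symm, by simp [taW]⟩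
    obtain ⟨hw, -⟩ := hopt v hv
    rcases List.eq_nil_or_concat (opt v) with h0 | ⟨L₀, a, h0⟩
    · rw [h0] at hw
      exact absurd hw.symm hvr
    rw [List.concat_eq_append] at h0
    rw [h0, isWalk_concat] at hw
    obtain ⟨hL₀, htime, haA, rfl⟩ := hw
    obtain ⟨htail, -, -, -, hst, -⟩ := B.valid a haA
    have hle := (hopt _ htail).2 L₀ hL₀
    rw [Prod.Lex.toLex_le_toLex] at hle
    have hta : taW (opt (TArc.tail a)) ≤ taW L₀ := by
      rcases hle with hle | hle
      · exact hle.le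
      · exact hle.1.le
    have hlt : m (opt (TArc.tail a)) < m (opt (TArc.head a)) := by
      rw [Prod.Lex.toLex_lt_toLex, h0, taW_concat, List.length_append, List.length_singleton]
      dsimp only at hle ⊢
      omega
    obtain ⟨L, hL, hLta⟩ := ih _ hlt htail
    refine ⟨L ++ [a], ?_, by rw [h0, taW_concat, taW_concat]⟩
    rw [isWalk_concat, Finset.mem_filter]
    exact ⟨hL, by omega, ⟨haA, hvr, by simp [h0]⟩, rfl⟩

/-- Lemma `lem:tob`, 1 ⟺ 4: a temporal graph `B` with `r ∈ V` is a TOB with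
root `r` iff distinct temporal arcs have distinct (tail, head) pairs, the underlying digraph is
an out-branching with root `r`, and for every `v ∈ V \ {r}` the unique `(r,v)`-walk in the
underlying digraph comes from a temporal `(r,v)`-walk in `B` which is the unique temporal
`(r,v)`-walk in `B`. -/
theorem stmt_2 {α : Type u} (B : TempGraph α) (r : α) (hr : r ∈ B.V) :
    IsTOB B r ↔
      ((B.A : Set (TArc α)).InjOn proj ∧
        IsOutBranching B.V (B.A.image proj) r ∧
        ∀ v ∈ B.V, v ≠ r → ∀ M, IsDWalk (B.A.image proj) r v M →
          ∃ L, L.map proj = M ∧ IsWalk B.A r v L ∧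
            ∀ L', IsWalk B.A r v L' → L' = L) := by
  constructor
  · rintro ⟨-, hreach, hmin⟩
    obtain ⟨S, hSA, hroot, hinj, hS⟩ := exists_reachAll_subset B r hreach
    obtain rfl : S = B.A := by
      by_contra hne
      exact hmin S (hSA.ssubset_of_ne hne) hS
    have huniq : ∀ {v M N}, IsDWalk (B.A.image proj) r v M → IsDWalk (B.A.image proj) r v N →
        M = N := by
      refine IsDWalk.unique ?_ ?_
      · intro e he
        obtain ⟨a, ha, rfl⟩ := Finset.mem_image.1 he
        exact hroot a ha
      · intro e he f hf hef
        obtain ⟨a, ha, rfl⟩ := Finset.mem_image.1 he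
        obtain ⟨b, hb, rfl⟩ := Finset.mem_image.1 hf
        rw [hinj a ha b hb hef]
    have hproj : (B.A : Set (TArc α)).InjOn proj := fun a ha b hb hab =>
      hinj a ha b hb (congrArg Prod.snd hab)
    refine ⟨hproj, fun v hv => ?_, fun v hv _ M hM => ?_⟩
    · obtain ⟨L, hL⟩ := hreach v hv
      exact ⟨L.map proj, hL.isDWalk, fun N hN => huniq hN hL.isDWalk⟩
    · obtain ⟨L, hL⟩ := hreach v hv
      refine ⟨L, huniq hL.isDWalk hM, hL, fun L' hL' => ?_⟩
      exact hL'.eq_of_map_proj_eq hproj hL (huniq hL'.isDWalk hL.isDWalk)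
  · rintro ⟨hproj, hout, hwalk⟩
    refine ⟨hr, fun v hv => ?_, fun S hSA hS => ?_⟩
    · by_cases hvr : v = r
      · exact ⟨[], hvr.symm⟩
      · obtain ⟨M, hM, -⟩ := hout v hv
        obtain ⟨L, -, hL, -⟩ := hwalk v hv hvr M hM
        exact ⟨L, hL⟩
    · obtain ⟨a, ha, haS⟩ := Finset.exists_of_ssubset hSA
      obtain ⟨htail, hhead, -⟩ := B.valid a ha
      obtain ⟨M, hM, -⟩ := hout _ htail
      obtain ⟨L, hL⟩ := hS _ hhead
      have hMa : IsDWalk (B.A.image proj) r (TArc.head a) (M ++ [proj a]) :=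
        (isDWalk_concat _ _ _ _ _).2 ⟨hM, Finset.mem_image_of_mem _ ha, rfl⟩
      have hmem : proj a ∈ L.map proj := by
        rw [(hout _ hhead).unique (hL.mono hSA.subset).isDWalk hMa]
        simp
      obtain ⟨b, hb, hba⟩ := List.mem_map.1 hmem
      have hbS := hL.mem hb
      rw [hproj (hSA.subset hbS) ha hba] at hbS
      exact haS hbS
end

section
/- Let G=(V,A,τ) be a temporal graph, r,u∈V, and d∈{MT,ST,LD}. Let W be a d-prefix-optimal temporal (r,u)-walk in G, let v∈V(W), let S be a v-suffix of W, and let W_v be a d-prefix-optimal temporal (r,v)-walk in G. If t_a(W_v) ≤ t_s(S), then the concatenation W_v+S is a d-prefix-optimal temporal (r,u)-walk in G. -/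
open scoped Classical

universe u

variable {α : Type u}

theorem isWalk_append_iff {S : Finset (TArc α)} {u w : α} {P X : List (TArc α)} :
    IsWalk S u w (P ++ X) ↔ ∃ v, IsWalk S u v P ∧ IsWalk S v w X ∧
      ∀ a ∈ P.getLast?, ∀ b ∈ X.head?, TArc.ta a ≤ TArc.ts b := by
  induction P generalizing u with
  | nil => simp [IsWalk]
  | cons a P ih =>
    cases P with
    | nil => simp [IsWalk]; tauto
    | cons c P =>
      rw [List.cons_append, IsWalk, ih]
      simp only [IsWalk, List.getLast?_cons_cons, List.cons_append, List.head?_cons]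
      grind

theorem IsWalk.endv_eq {S : Finset (TArc α)} {u v : α} {L : List (TArc α)}
    (hL : IsWalk S u v L) : endv u L = v := by
  induction L generalizing u with
  | nil => simpa [endv, IsWalk] using hL
  | cons a L ih =>
    rw [← ih hL.2.2.2, endv, endv, List.map_cons, List.getLastD_cons]

theorem taW_eq_of_mem_getLast? {L : List (TArc α)} {a : TArc α} (ha : a ∈ L.getLast?) :
    taW L = TArc.ta a := by
  simp only [Option.mem_def] at ha
  simp [taW, List.getLastD_eq_getLast?, ha]

theorem tsW_eq_of_mem_head? {L : List (TArc α)} {b : TArc α} (hb : b ∈ L.head?) :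
    tsW L = TArc.ts b := by
  cases L <;> simp_all [tsW]

theorem IsWalk.append {S : Finset (TArc α)} {u v w : α} {P X : List (TArc α)}
    (hP : IsWalk S u v P) (hX : IsWalk S v w X) (ht : X ≠ [] → taW P ≤ tsW X) :
    IsWalk S u w (P ++ X) := by
  refine isWalk_append_iff.2 ⟨v, hP, hX, fun a ha b hb => ?_⟩
  rw [← taW_eq_of_mem_getLast? ha, ← tsW_eq_of_mem_head? hb]
  exact ht (by rintro rfl; simp at hb)

theorem IsWalk.eq_nil_of_tsW_eq_zero {G : TempGraph α} {u v : α} {L : List (TArc α)}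
    (hL : IsWalk G.A u v L) (h0 : tsW L = 0) : L = [] := by
  cases L with
  | nil => rfl
  | cons a L =>
    have := (G.valid a hL.1).2.2.2.1
    simp [tsW] at h0
    omega

theorem tsW_append_of_ne_nil {P X : List (TArc α)} (hP : P ≠ []) : tsW (P ++ X) = tsW P := by
  cases P <;> simp_all [tsW]

theorem Realizes.wval_eq {d : DistKind} {S : Finset (TArc α)} {u v : α} {P Q : List (TArc α)}
    (hP : Realizes d S u v P) (hQ : Realizes d S u v Q) : wval d P = wval d Q := by
  have h₁ := hP.2 Q hQ.1
  have h₂ := hQ.2 P hP.1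
  split_ifs at h₁ h₂ <;> exact le_antisymm ‹_› ‹_›

/-- Walks realizing the same distance have the same value after appending a common suffix. -/
theorem Realizes.wval_append_eq {d : DistKind}
    (hd : d = DistKind.MT ∨ d = DistKind.ST ∨ d = DistKind.LD) {G : TempGraph α} {u v : α}
    {P Q : List (TArc α)} (hP : Realizes d G.A u v P) (hQ : Realizes d G.A u v Q)
    (X : List (TArc α)) : wval d (P ++ X) = wval d (Q ++ X) := by
  have hPQ := hP.wval_eq hQ
  rcases hd with rfl | rfl | rfl
  · simpa [wval] using hPQ
  · simpa [wval, ttW] using hPQ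
  · simp only [wval] at hPQ ⊢
    by_cases hP0 : P = []
    · have hQ0 : Q = [] := hQ.1.eq_nil_of_tsW_eq_zero (by rw [← hPQ, hP0]; rfl)
      rw [hP0, hQ0]
    · have hQ0 : Q ≠ [] := fun hQ0 =>
        hP0 (hP.1.eq_nil_of_tsW_eq_zero (by rw [hPQ, hQ0]; rfl))
      rw [tsW_append_of_ne_nil hP0, tsW_append_of_ne_nil hQ0, hPQ]

/-- Replacing an optimal prefix of an optimal walk by another optimal one keeps optimality. -/
theorem Realizes.append_of_append {d : DistKind}
    (hd : d = DistKind.MT ∨ d = DistKind.ST ∨ d = DistKind.LD) {G : TempGraph α} {u v w : α}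
    {P Q X : List (TArc α)} (hP : Realizes d G.A u v P) (hQ : Realizes d G.A u v Q)
    (hPX : Realizes d G.A u w (P ++ X)) (ht : X ≠ [] → taW Q ≤ tsW X) :
    Realizes d G.A u w (Q ++ X) := by
  obtain ⟨v', hP', hX, -⟩ := isWalk_append_iff.1 hPX.1
  obtain rfl : v = v' := hP.1.endv_eq.symm.trans hP'.endv_eq
  refine ⟨hQ.1.append hX ht, fun L hL => ?_⟩
  rw [← hP.wval_append_eq hd hQ X]
  exact hPX.2 L hL

/-- Lemma `claim:subopt`: for `d ∈ {MT, ST, LD}`, if `W` is a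
`d`-prefix-optimal temporal `(r,u)`-walk, `v ∈ V(W)`, `S` is a `v`-suffix of `W` (here: the
suffix `W.drop h` where the `h`-prefix of `W` ends at `v`), `W_v` is a `d`-prefix-optimal
temporal `(r,v)`-walk, and `t_a(W_v) ≤ t_s(S)`, then `W_v + S` is a `d`-prefix-optimal
temporal `(r,u)`-walk. -/
theorem stmt_7 {α : Type u} (G : TempGraph α) (r u v : α) (d : DistKind)
    (hd : d = DistKind.MT ∨ d = DistKind.ST ∨ d = DistKind.LD)
    (W Wv : List (TArc α)) (h : ℕ) (hh : h ≤ W.length)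
    (hW : IsWalk G.A r u W) (hWpo : PrefixOptimal d G.A r W)
    (hv : endv r (W.take h) = v)
    (hWv : IsWalk G.A r v Wv) (hWvpo : PrefixOptimal d G.A r Wv)
    (hta : taW Wv ≤ tsW (W.drop h)) :
    IsWalk G.A r u (Wv ++ W.drop h) ∧ PrefixOptimal d G.A r (Wv ++ W.drop h) := by
  have hP : Realizes d G.A r v (W.take h) := hv ▸ hWpo h hh
  have hQ : Realizes d G.A r v Wv := by
    simpa [hWv.endv_eq] using hWvpo Wv.length le_rfl
  have key : ∀ j ≤ (W.drop h).length, Realizes d G.A r (endv r (W.take (h + j)))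
      (Wv ++ (W.drop h).take j) := by
    intro j hj
    have hPX := hWpo (h + j) (by simp at hj; omega)
    refine hP.append_of_append hd hQ (X := (W.drop h).take j) ?_ fun hne => ?_
    · rwa [← List.take_add]
    · obtain ⟨i, rfl⟩ : ∃ i, j = i + 1 :=
        Nat.exists_eq_succ_of_ne_zero (by rintro rfl; simp at hne)
      refine hta.trans_eq ?_
      cases W.drop h <;> simp [tsW]
  refine ⟨?_, fun k hk => ?_⟩
  · have := (key _ le_rfl).1
    rw [List.take_length, List.length_drop, Nat.add_sub_cancel' hh, List.take_length,
      hW.endv_eq] at this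
    exact this
  · rcases le_total k Wv.length with hle | hle
    · rw [List.take_append_of_le_length hle]
      exact hWvpo k hle
    · obtain ⟨j, rfl⟩ := Nat.exists_eq_add_of_le hle
      rw [List.take_length_add_append]
      have hR := key j (by simp at hk ⊢; omega)
      rwa [hR.1.endv_eq]
end

section
/- Let φ be a CNF formula with variables x_1,…,x_n and nonempty clauses c_1,…,c_m. Let G=(V,A,2) be the temporal graph with V={x_1,…,x_n}∪{c_1,…,c_m}∪{r} and A consisting of: the arcs (r,x_i,1,1) and (r,x_i,2,2) for every i∈[n]; the arc (x_i,c_j,1,1) for every clause c_j and variable x_i occurring positively in c_j; and the arc (x_i,c_j,2,2) for every clause c_j and variable x_i occurring negatively in c_j. Then, for each d∈{FT,MW}, G has a spanning d-TOB with root r if and only if φ is satisfiable. -/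
open scoped Classical

universe u

variable {α : Type u}

/-- Vertex set of the reduction: variables, clauses and the root. -/
abbrev V13 (n m : ℕ) := Sum (Fin n) (Sum (Fin m) Unit)

/-- The root vertex `r`. -/
def rt13 (n m : ℕ) : V13 n m := Sum.inr (Sum.inr ())

/-- The temporal graph of the reduction of Theorem `thm:FT_tob_hard` (elapsed time 0 case):
arcs `(r,x_i,1,1)`, `(r,x_i,2,2)` for every variable, `(x_i,c_j,1,1)` when `x_i` occurs
positively in `c_j` and `(x_i,c_j,2,2)` when `x_i` occurs negatively in `c_j`. -/
noncomputable def G13 (n m : ℕ) (pos neg : Fin m → Finset (Fin n)) :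
    TempGraph (V13 n m) where
  V := Finset.univ
  A :=
    (Finset.univ.image fun i : Fin n =>
        ((rt13 n m, Sum.inl i, 1, 1) : TArc (V13 n m)))
    ∪ (Finset.univ.image fun i : Fin n =>
        ((rt13 n m, Sum.inl i, 2, 2) : TArc (V13 n m)))
    ∪ (Finset.univ.biUnion fun j : Fin m =>
        ((pos j).image fun i =>
          ((Sum.inl i, Sum.inr (Sum.inl j), 1, 1) : TArc (V13 n m)))
        ∪ ((neg j).image fun i =>
          ((Sum.inl i, Sum.inr (Sum.inl j), 2, 2) : TArc (V13 n m))))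
  τ := 2
  nonempty := ⟨rt13 n m, Finset.mem_univ _⟩
  valid := by
    intro a ha
    simp only [Finset.mem_union, Finset.mem_image, Finset.mem_biUnion, Finset.mem_univ,
      true_and] at ha
    rcases ha with ((⟨i, rfl⟩ | ⟨i, rfl⟩) | ⟨j, (⟨i, -, rfl⟩ | ⟨i, -, rfl⟩)⟩) <;>
      exact ⟨Finset.mem_univ _, Finset.mem_univ _,
        by simp [TArc.tail, TArc.head, rt13],
        by norm_num [TArc.ts], by norm_num [TArc.ts, TArc.ta], by norm_num [TArc.ta]⟩

namespace SatReduction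

variable {n m : ℕ} {pos neg : Fin m → Finset (Fin n)}

/-- The arc from the root to the variable `x_i` at time `t`. -/
abbrev rootArc (m : ℕ) (i : Fin n) (t : ℕ) : TArc (V13 n m) := (rt13 n m, Sum.inl i, t, t)

/-- The arc from the variable `x_i` to the clause `c_j` at time `t`. -/
abbrev clauseArc (i : Fin n) (j : Fin m) (t : ℕ) : TArc (V13 n m) :=
  (Sum.inl i, Sum.inr (Sum.inl j), t, t)

/-- The literal of `x_i` whose truth is encoded by time `t` occurs in the clause `c_j`. -/
def Occurs (pos neg : Fin m → Finset (Fin n)) (i : Fin n) (j : Fin m) (t : ℕ) : Prop :=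
  (t = 1 ∧ i ∈ pos j) ∨ (t = 2 ∧ i ∈ neg j)

theorem mem_arcs_iff (a : TArc (V13 n m)) :
    a ∈ (G13 n m pos neg).A ↔
      (∃ i t, (t = 1 ∨ t = 2) ∧ a = rootArc m i t) ∨
      ∃ i j t, Occurs pos neg i j t ∧ a = clauseArc i j t := by
  simp only [G13, Finset.mem_union, Finset.mem_image, Finset.mem_biUnion, Finset.mem_univ,
    true_and, Occurs]
  constructor
  · rintro ((⟨i, rfl⟩ | ⟨i, rfl⟩) | ⟨j, ⟨i, hi, rfl⟩ | ⟨i, hi, rfl⟩⟩)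
    · exact .inl ⟨i, 1, .inl rfl, rfl⟩
    · exact .inl ⟨i, 2, .inr rfl, rfl⟩
    · exact .inr ⟨i, j, 1, .inl ⟨rfl, hi⟩, rfl⟩
    · exact .inr ⟨i, j, 2, .inr ⟨rfl, hi⟩, rfl⟩
  · rintro (⟨i, t, rfl | rfl, rfl⟩ | ⟨i, j, t, ⟨rfl, hi⟩ | ⟨rfl, hi⟩, rfl⟩)
    · exact .inl (.inl ⟨i, rfl⟩)
    · exact .inl (.inr ⟨i, rfl⟩)
    · exact .inr ⟨j, .inl ⟨i, hi, rfl⟩⟩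
    · exact .inr ⟨j, .inr ⟨i, hi, rfl⟩⟩

theorem occurs_of_mem {i : Fin n} {j : Fin m} {t : ℕ}
    (h : clauseArc i j t ∈ (G13 n m pos neg).A) : Occurs pos neg i j t := by
  rcases (mem_arcs_iff _).1 h with ⟨i', t', -, h⟩ | ⟨i', j', t', ho, h⟩
  · simp [rt13] at h
  · simp only [Prod.mk.injEq, Sum.inl.injEq, Sum.inr.injEq] at h
    obtain ⟨rfl, rfl, rfl, -⟩ := h
    exact ho

theorem isWalk_rootArc {S : Finset (TArc (V13 n m))} {i : Fin n} {t : ℕ}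
    (h : rootArc m i t ∈ S) : IsWalk S (rt13 n m) (Sum.inl i) [rootArc m i t] := by
  simp [IsWalk, TArc.tail, TArc.head, h]

theorem isWalk_rootArc_clauseArc {S : Finset (TArc (V13 n m))} {i : Fin n} {j : Fin m} {s t : ℕ}
    (h₁ : rootArc m i s ∈ S) (h₂ : clauseArc i j t ∈ S) (hst : s ≤ t) :
    IsWalk S (rt13 n m) (Sum.inr (Sum.inl j)) [rootArc m i s, clauseArc i j t] := by
  simp [IsWalk, TArc.tail, TArc.head, TArc.ta, TArc.ts, h₁, h₂, hst]

theorem isWalk_clause_eq_nil {S : Finset (TArc (V13 n m))} (hS : S ⊆ (G13 n m pos neg).A)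
    {j : Fin m} {v : V13 n m} {L : List (TArc (V13 n m))}
    (h : IsWalk S (Sum.inr (Sum.inl j)) v L) : v = Sum.inr (Sum.inl j) ∧ L = [] := by
  cases L with
  | nil => exact ⟨h.symm, rfl⟩
  | cons a L =>
    obtain ⟨ha, ht, -⟩ := h
    rcases (mem_arcs_iff a).1 (hS ha) with ⟨i, t, -, rfl⟩ | ⟨i, j, t, -, rfl⟩ <;>
      simp [TArc.tail, rt13] at ht

theorem isWalk_root_cases {S : Finset (TArc (V13 n m))} (hS : S ⊆ (G13 n m pos neg).A)
    {v : V13 n m} {L : List (TArc (V13 n m))} (h : IsWalk S (rt13 n m) v L) :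
    (v = rt13 n m ∧ L = []) ∨
    (∃ i t, v = Sum.inl i ∧ rootArc m i t ∈ S ∧ L = [rootArc m i t]) ∨
    ∃ i j s t, v = Sum.inr (Sum.inl j) ∧ rootArc m i s ∈ S ∧ clauseArc i j t ∈ S ∧ s ≤ t ∧
      L = [rootArc m i s, clauseArc i j t] := by
  rcases L with _ | ⟨a, L⟩
  · exact .inl ⟨h.symm, rfl⟩
  obtain ⟨ha, hta, hle, hL⟩ := h
  rcases (mem_arcs_iff a).1 (hS ha) with ⟨i, s, -, rfl⟩ | ⟨i, j, t, -, rfl⟩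
  swap
  · simp [TArc.tail, rt13] at hta
  rcases L with _ | ⟨b, L⟩
  · exact .inr (.inl ⟨i, s, hL.symm, ha, rfl⟩)
  obtain ⟨hb, htb, -, hL⟩ := hL
  rcases (mem_arcs_iff b).1 (hS hb) with ⟨i', t, -, rfl⟩ | ⟨i', j, t, -, rfl⟩
  · simp [TArc.tail, TArc.head, rt13] at htb
  obtain rfl : i' = i := by simpa [TArc.tail, TArc.head] using htb
  obtain ⟨rfl, rfl⟩ := isWalk_clause_eq_nil hS hL
  exact .inr (.inr ⟨i', j, s, t, rfl, ha, hb, by simpa [TArc.ta, TArc.ts] using hle, rfl⟩)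

theorem exists_rootArc_mem {S : Finset (TArc (V13 n m))} (hS : S ⊆ (G13 n m pos neg).A)
    {i : Fin n} {L : List (TArc (V13 n m))} (h : IsWalk S (rt13 n m) (Sum.inl i) L) :
    ∃ t, rootArc m i t ∈ S := by
  rcases isWalk_root_cases hS h with ⟨hv, -⟩ | ⟨i', t, hv, ht, -⟩ | ⟨i', j, s, t, hv, -⟩
  · simp [rt13] at hv
  · obtain rfl := Sum.inl.inj hv
    exact ⟨t, ht⟩
  · simp at hv

theorem exists_arcs_mem {S : Finset (TArc (V13 n m))} (hS : S ⊆ (G13 n m pos neg).A)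
    {j : Fin m} {L : List (TArc (V13 n m))}
    (h : IsWalk S (rt13 n m) (Sum.inr (Sum.inl j)) L) :
    ∃ i s t, rootArc m i s ∈ S ∧ clauseArc i j t ∈ S ∧ s ≤ t ∧
      L = [rootArc m i s, clauseArc i j t] := by
  rcases isWalk_root_cases hS h with ⟨hv, -⟩ | ⟨i', t, hv, -⟩ | ⟨i, j', s, t, hv, h⟩
  · simp [rt13] at hv
  · simp at hv
  · obtain rfl := Sum.inl.inj (Sum.inr.inj hv)
    exact ⟨i, s, t, h⟩

theorem distVal_eq_zero_iff {α : Type*} {d : DistKind} (hd : d = DistKind.FT ∨ d = DistKind.MW)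
    (G : TempGraph α) (u v : α) :
    distVal d G u v = 0 ↔ ∃ L, IsWalk G.A u v L ∧ wval d L = 0 := by
  have hLD : d ≠ DistKind.LD := by rcases hd with rfl | rfl <;> simp
  rw [distVal, if_neg hLD, ENat.sInf_eq_zero]
  simp [eq_comm]

theorem wval_nil {α : Type*} {d : DistKind} (hd : d = DistKind.FT ∨ d = DistKind.MW) :
    wval d ([] : List (TArc α)) = 0 := by
  rcases hd with rfl | rfl <;> simp [wval, durW, waitW, taW]

theorem wval_rootArc {d : DistKind} (hd : d = DistKind.FT ∨ d = DistKind.MW)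
    (i : Fin n) (t : ℕ) : wval d [rootArc m i t] = 0 := by
  rcases hd with rfl | rfl <;> simp [wval, durW, waitW, taW, tsW, TArc.ta, TArc.ts]

theorem wval_rootArc_clauseArc {d : DistKind} (hd : d = DistKind.FT ∨ d = DistKind.MW)
    (i : Fin n) (j : Fin m) (s t : ℕ) :
    wval d [rootArc m i s, clauseArc i j t] = t - s := by
  rcases hd with rfl | rfl <;> simp [wval, durW, waitW, taW, tsW, TArc.ta, TArc.ts]

theorem distVal_reduction_eq_zero {d : DistKind} (hd : d = DistKind.FT ∨ d = DistKind.MW)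
    (hne : ∀ j, (pos j ∪ neg j).Nonempty) (v : V13 n m) :
    distVal d (G13 n m pos neg) (rt13 n m) v = 0 := by
  rw [distVal_eq_zero_iff hd]
  rcases v with i | j | ⟨⟩
  · exact ⟨_, isWalk_rootArc ((mem_arcs_iff _).2 (.inl ⟨i, 1, .inl rfl, rfl⟩)),
      wval_rootArc hd i 1⟩
  · obtain ⟨i, hi⟩ := hne j
    obtain ⟨t, ht, ho⟩ : ∃ t, (t = 1 ∨ t = 2) ∧ Occurs pos neg i j t := by
      rcases Finset.mem_union.1 hi with h | h
      · exact ⟨1, .inl rfl, .inl ⟨rfl, h⟩⟩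
      · exact ⟨2, .inr rfl, .inr ⟨rfl, h⟩⟩
    exact ⟨_, isWalk_rootArc_clauseArc ((mem_arcs_iff _).2 (.inl ⟨i, t, ht, rfl⟩))
      ((mem_arcs_iff _).2 (.inr ⟨i, j, t, ho, rfl⟩)) le_rfl,
      by rw [wval_rootArc_clauseArc hd, Nat.sub_self]⟩
  · exact ⟨[], rfl, wval_nil hd⟩

/-- A temporal out-branching does not use the two root arcs of a variable. -/
theorem not_both_rootArcs {B : TempGraph (V13 n m)} (hB : IsTOB B (rt13 n m))
    (hsub : B.A ⊆ (G13 n m pos neg).A) (i : Fin n)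
    (h₁ : rootArc m i 1 ∈ B.A) (h₂ : rootArc m i 2 ∈ B.A) : False := by
  refine hB.2.2 (B.A.erase (rootArc m i 2)) (Finset.erase_ssubset h₂) fun v hv => ?_
  have key : ∀ i' t, rootArc m i' t ∈ B.A →
      ∃ s ≤ t, rootArc m i' s ∈ B.A.erase (rootArc m i 2) := by
    intro i' t ht
    by_cases h : rootArc m i' t = rootArc m i 2
    · simp only [Prod.mk.injEq, Sum.inl.injEq, true_and] at h
      obtain ⟨rfl, rfl, -⟩ := h
      exact ⟨1, by norm_num, Finset.mem_erase.2 ⟨by simp, h₁⟩⟩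
    · exact ⟨t, le_rfl, Finset.mem_erase.2 ⟨h, ht⟩⟩
  obtain ⟨L, hL⟩ := hB.2.1 v hv
  rcases isWalk_root_cases hsub hL with
    ⟨rfl, -⟩ | ⟨i', t, rfl, ht, -⟩ | ⟨i', j, s, t, rfl, hs, ht, hst, -⟩
  · exact ⟨[], rfl⟩
  · obtain ⟨s, -, hs⟩ := key i' t ht
    exact ⟨_, isWalk_rootArc hs⟩
  · obtain ⟨s', hs', hm⟩ := key i' s hs
    exact ⟨_, isWalk_rootArc_clauseArc hm (Finset.mem_erase.2 ⟨by simp [rt13], ht⟩)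
      (hs'.trans hst)⟩

theorem satisfiable_of_spanning (hne : ∀ j, (pos j ∪ neg j).Nonempty) {d : DistKind}
    (hd : d = DistKind.FT ∨ d = DistKind.MW) {B : TempGraph (V13 n m)}
    (hB : IsSpanningDTOB d (G13 n m pos neg) B (rt13 n m)) : Satisfiable n m pos neg := by
  obtain ⟨⟨hT, ⟨-, hsub, -⟩, hdist⟩, hV⟩ := hB
  refine ⟨fun i => decide (rootArc m i 1 ∈ B.A), fun j => ?_⟩
  have h0 := hdist (Sum.inr (Sum.inl j)) (by rw [hV]; exact Finset.mem_univ _)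
  rw [distVal_reduction_eq_zero hd hne, distVal_eq_zero_iff hd] at h0
  obtain ⟨L, hL, hw⟩ := h0
  obtain ⟨i, s, t, hs, ht, hst, rfl⟩ := exists_arcs_mem hsub hL
  rw [wval_rootArc_clauseArc hd] at hw
  obtain rfl : s = t := by omega
  rcases occurs_of_mem (hsub ht) with ⟨rfl, hi⟩ | ⟨rfl, hi⟩
  · exact .inl ⟨i, hi, by simpa using hs⟩
  · exact .inr ⟨i, hi, by simpa using fun h => not_both_rootArcs hT hsub i h hs⟩

/-- The time encoding a truth value: `1` for true, `2` for false. -/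
def litTime (b : Bool) : ℕ := if b then 1 else 2

/-- The arcs of the branching given by an assignment `σ` and a choice `w` of a variable for
each clause. -/
noncomputable def branchingArcs (σ : Fin n → Bool) (w : Fin m → Fin n) :
    Finset (TArc (V13 n m)) :=
  (Finset.univ.image fun i => rootArc m i (litTime (σ i))) ∪
    Finset.univ.image fun j => clauseArc (w j) j (litTime (σ (w j)))

theorem mem_branchingArcs {σ : Fin n → Bool} {w : Fin m → Fin n} {a : TArc (V13 n m)} :
    a ∈ branchingArcs σ w ↔ (∃ i, rootArc m i (litTime (σ i)) = a) ∨
      ∃ j, clauseArc (w j) j (litTime (σ (w j))) = a := by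
  simp [branchingArcs]

theorem branchingArcs_subset {σ : Fin n → Bool} {w : Fin m → Fin n}
    (hw : ∀ j, Occurs pos neg (w j) j (litTime (σ (w j)))) :
    branchingArcs σ w ⊆ (G13 n m pos neg).A := by
  intro a ha
  rw [mem_arcs_iff]
  rcases mem_branchingArcs.1 ha with ⟨i, rfl⟩ | ⟨j, rfl⟩
  · exact .inl ⟨i, _, by cases σ i <;> simp [litTime], rfl⟩
  · exact .inr ⟨_, j, _, hw j, rfl⟩

/-- In the branching, an arc is determined by its head. -/
theorem branchingArcs_head_injOn {σ : Fin n → Bool} {w : Fin m → Fin n} {a b : TArc (V13 n m)}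
    (ha : a ∈ branchingArcs σ w) (hb : b ∈ branchingArcs σ w) (h : a.head = b.head) : a = b := by
  rcases mem_branchingArcs.1 ha with ⟨i, rfl⟩ | ⟨j, rfl⟩ <;>
    rcases mem_branchingArcs.1 hb with ⟨i', rfl⟩ | ⟨j', rfl⟩ <;>
    simp only [TArc.head, Sum.inl.injEq, Sum.inr.injEq, reduceCtorEq] at h <;> subst h <;> rfl

theorem exists_spanning_of_satisfiable (hne : ∀ j, (pos j ∪ neg j).Nonempty) {d : DistKind}
    (hd : d = DistKind.FT ∨ d = DistKind.MW) (hsat : Satisfiable n m pos neg) :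
    ∃ B : TempGraph (V13 n m), IsSpanningDTOB d (G13 n m pos neg) B (rt13 n m) := by
  obtain ⟨σ, hσ⟩ := hsat
  have hocc : ∀ j, ∃ i, Occurs pos neg i j (litTime (σ i)) := by
    intro j
    rcases hσ j with ⟨i, hi, h⟩ | ⟨i, hi, h⟩
    · exact ⟨i, .inl ⟨by simp [litTime, h], hi⟩⟩
    · exact ⟨i, .inr ⟨by simp [litTime, h], hi⟩⟩
  choose w hw using hocc
  have hsub := branchingArcs_subset hw
  let B : TempGraph (V13 n m) :=
    { V := Finset.univ
      A := branchingArcs σ w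
      τ := 2
      nonempty := ⟨rt13 n m, Finset.mem_univ _⟩
      valid := fun a ha => (G13 n m pos neg).valid a (hsub ha) }
  have hroot : ∀ i, rootArc m i (litTime (σ i)) ∈ branchingArcs σ w :=
    fun i => mem_branchingArcs.2 (.inl ⟨i, rfl⟩)
  have hwalk : ∀ v, ∃ L, IsWalk (branchingArcs σ w) (rt13 n m) v L ∧ wval d L = 0 := by
    rintro (i | j | ⟨⟩)
    · exact ⟨_, isWalk_rootArc (hroot i), wval_rootArc hd _ _⟩
    · exact ⟨_, isWalk_rootArc_clauseArc (hroot (w j)) (mem_branchingArcs.2 (.inr ⟨j, rfl⟩))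
        le_rfl, by rw [wval_rootArc_clauseArc hd, Nat.sub_self]⟩
    · exact ⟨[], rfl, wval_nil hd⟩
  refine ⟨B, ⟨⟨Finset.mem_univ _, fun v _ => (hwalk v).imp fun _ h => h.1, ?_⟩,
    ⟨Finset.Subset.refl _, hsub, le_rfl⟩, fun v _ => ?_⟩, rfl⟩
  · intro S hS hreach
    obtain ⟨a, ha, haS⟩ := Finset.exists_of_ssubset hS
    obtain ⟨b, hb, hab⟩ : ∃ b ∈ S, a.head = b.head := by
      obtain ⟨L, hL⟩ := hreach a.head (Finset.mem_univ _)
      rcases mem_branchingArcs.1 ha with ⟨i, rfl⟩ | ⟨j, rfl⟩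
      · obtain ⟨t, ht⟩ := exists_rootArc_mem (hS.1.trans hsub) hL
        exact ⟨_, ht, rfl⟩
      · obtain ⟨i, s, t, -, ht, -⟩ := exists_arcs_mem (hS.1.trans hsub) hL
        exact ⟨_, ht, rfl⟩
    exact haS (branchingArcs_head_injOn ha (hS.1 hb) hab ▸ hb)
  · rw [distVal_reduction_eq_zero hd hne, distVal_eq_zero_iff hd]
    exact hwalk v

end SatReduction

/-- Theorem `thm:FT_tob_hard`, elapsed time 0, `τ = 2`: for
`d ∈ {FT, MW}`, the reduction graph has a spanning `d`-TOB with root `r` iff the CNF formula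
is satisfiable. -/
theorem stmt_13 (n m : ℕ) (pos neg : Fin m → Finset (Fin n))
    (hne : ∀ j, (pos j ∪ neg j).Nonempty)
    (d : DistKind) (hd : d = DistKind.FT ∨ d = DistKind.MW) :
    (∃ B : TempGraph (V13 n m), IsSpanningDTOB d (G13 n m pos neg) B (rt13 n m)) ↔
      Satisfiable n m pos neg := by
  exact ⟨fun ⟨_, hB⟩ => SatReduction.satisfiable_of_spanning hne hd hB,
    SatReduction.exists_spanning_of_satisfiable hne hd⟩
end

section
/- Let d∈{FT,MW}, let G=(V,A,2) be a temporal graph with el(a)≥1 for every a∈A, and let r∈V. Then every maximum d-TOB of G rooted at r has vertex set {r} ∪ {u∈V : (r,u,1,2)∈A}. -/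
open scoped Classical

universe u

variable {α : Type u}

/-- With lifetime `2` and positive elapsed times, every temporal arc has the form `(u, v, 1, 2)`. -/
lemma TempGraph.arc_eq (G : TempGraph α) (hτ : G.τ = 2) (hel : ∀ a ∈ G.A, 1 ≤ TArc.el a)
    {a : TArc α} (ha : a ∈ G.A) : a = (TArc.tail a, TArc.head a, 1, 2) := by
  obtain ⟨-, -, -, h₁, -, h₂⟩ := G.valid a ha
  have h₃ := hel a ha
  obtain ⟨x, y, s, t⟩ := a
  simp only [TArc.el, TArc.ts, TArc.ta, TArc.tail, TArc.head, Prod.mk.injEq, true_and] at *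
  omega

/-- If all arcs are of the form `(u, v, 1, 2)`, a temporal walk has at most one arc. -/
lemma isWalk_iff_of_arc_eq {S : Finset (TArc α)}
    (hS : ∀ a ∈ S, a = (TArc.tail a, TArc.head a, 1, 2)) (u v : α) (L : List (TArc α)) :
    IsWalk S u v L ↔ (L = [] ∧ u = v) ∨ (L = [(u, v, 1, 2)] ∧ ((u, v, 1, 2) : TArc α) ∈ S) := by
  match L with
  | [] => simp [IsWalk]
  | [a] =>
    constructor
    · rintro ⟨ha, rfl, -, rfl⟩
      rw [← hS a ha]
      exact Or.inr ⟨rfl, ha⟩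
    · rintro (⟨h, -⟩ | ⟨h, ha⟩)
      · cases h
      · cases h
        exact ⟨ha, rfl, by simp, rfl⟩
  | a :: b :: L =>
    constructor
    · rintro ⟨ha, -, hab, hb, -⟩
      have h : TArc.ta a ≤ TArc.ts b := hab b rfl
      rw [hS a ha, hS b hb] at h
      simp [TArc.ta, TArc.ts] at h
    · rintro (⟨h, -⟩ | ⟨h, -⟩) <;> cases h

/-- The temporal subgraph of `G` formed by `r` and the arcs leaving `r`, for a vertex set `Z`
containing `r` and the heads of these arcs. -/
noncomputable def TempGraph.outStar (G : TempGraph α) (r : α) (Z : Finset α) (hr : r ∈ Z)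
    (hZ : ∀ a ∈ G.A, TArc.tail a = r → TArc.head a ∈ Z) : TempGraph α where
  V := Z
  A := G.A.filter fun a => TArc.tail a = r
  τ := G.τ
  nonempty := ⟨r, hr⟩
  valid := by
    intro a ha
    obtain ⟨haA, har⟩ := Finset.mem_filter.mp ha
    exact ⟨har ▸ hr, hZ a haA har, (G.valid a haA).2.2⟩

/-- from Proposition `prop:gaps_FTMW`, case `τ = 2`: for `d ∈ {FT, MW}`, if
`G` has lifetime `2` and every arc has elapsed time at least `1`, then every maximum `d`-TOB
of `G` rooted at `r` has vertex set `{r} ∪ {u ∈ V : (r,u,1,2) ∈ A}`. -/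
theorem stmt_15 {α : Type u} (G : TempGraph α) (hτ : G.τ = 2)
    (hel : ∀ a ∈ G.A, 1 ≤ TArc.el a) (r : α) (hr : r ∈ G.V)
    (d : DistKind) (hd : d = DistKind.FT ∨ d = DistKind.MW)
    (B : TempGraph α) (hB : IsMaxDTOB d G B r) :
    B.V = insert r (G.V.filter fun u => ((r, u, 1, 2) : TArc α) ∈ G.A) := by
  have hA : ∀ a ∈ G.A, a = (TArc.tail a, TArc.head a, 1, 2) := fun a => G.arc_eq hτ hel
  obtain ⟨⟨⟨-, hreach, -⟩, ⟨hBV, hBA, -⟩, -⟩, hmax⟩ := hB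
  set Z := insert r (G.V.filter fun u => ((r, u, 1, 2) : TArc α) ∈ G.A)
  have hrZ : r ∈ Z := Finset.mem_insert_self _ _
  have hheads : ∀ a ∈ G.A, TArc.tail a = r → TArc.head a ∈ Z := by
    rintro a ha rfl
    refine Finset.mem_insert_of_mem (Finset.mem_filter.mpr ⟨(G.valid a ha).2.1, ?_⟩)
    rw [← hA a ha]
    exact ha
  have hsub : B.V ⊆ Z := by
    intro v hv
    obtain ⟨L, hL⟩ := hreach v hv
    rcases (isWalk_iff_of_arc_eq (fun a ha => hA a (hBA ha)) r v L).mp hL with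
      ⟨-, rfl⟩ | ⟨-, h⟩
    · exact hrZ
    · exact Finset.mem_insert_of_mem (Finset.mem_filter.mpr ⟨hBV hv, hBA h⟩)
  have hSA : ∀ a ∈ (G.outStar r Z hrZ hheads).A, a ∈ G.A ∧ TArc.tail a = r :=
    fun a ha => Finset.mem_filter.mp ha
  have hwalk : ∀ v L, IsWalk (G.outStar r Z hrZ hheads).A r v L ↔ IsWalk G.A r v L := by
    intro v L
    rw [isWalk_iff_of_arc_eq (fun a ha => hA a (hSA a ha).1), isWalk_iff_of_arc_eq hA]
    have hmem : ((r, v, 1, 2) : TArc α) ∈ (G.outStar r Z hrZ hheads).A ↔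
        ((r, v, 1, 2) : TArc α) ∈ G.A :=
      ⟨fun h => (hSA _ h).1, fun h => Finset.mem_filter.mpr ⟨h, rfl⟩⟩
    rw [hmem]
  refine Finset.eq_of_subset_of_card_le hsub (hmax (G.outStar r Z hrZ hheads) ⟨⟨hrZ, ?_, ?_⟩,
    ⟨?_, Finset.filter_subset _ _, le_rfl⟩, ?_⟩)
  · intro v hv
    simp only [hwalk, isWalk_iff_of_arc_eq hA]
    rcases Finset.mem_insert.mp hv with rfl | h
    · exact ⟨[], Or.inl ⟨rfl, rfl⟩⟩
    · exact ⟨_, Or.inr ⟨rfl, (Finset.mem_filter.mp h).2⟩⟩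
  · intro S hS hSreach
    obtain ⟨a, ha, haS⟩ := Finset.exists_of_ssubset hS
    obtain ⟨haG, har⟩ := hSA a ha
    obtain ⟨L, hL⟩ := hSreach _ (hheads a haG har)
    rcases (isWalk_iff_of_arc_eq (fun b hb => hA b (hSA b (hS.1 hb)).1) _ _ _).mp hL with
      ⟨-, h⟩ | ⟨-, h⟩
    · exact (G.valid a haG).2.2.1 (har.trans h)
    · rw [← har, ← hA a haG] at h
      exact haS h
  · exact Finset.insert_subset hr (Finset.filter_subset _ _)
  · intro v _
    simp only [distVal, hwalk]
    rfl
end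

section
/- Let φ be a CNF formula with variables x_1,…,x_l and nonempty clauses c_1,…,c_m. Let G=(V,A,3) be the temporal graph with V = {x_1^p,…,x_l^p} ∪ {x_1^n,…,x_l^n} ∪ {y_1,…,y_l} ∪ {c_1,…,c_m} ∪ {r} and A consisting of: for each α∈{p,n} and i∈[l], the arcs (r,x_i^α,1,2), (r,x_i^α,3,3) and (x_i^α,y_i,2,2); the arc (x_i^p,c_j,2,2) for every clause c_j and variable x_i occurring positively in c_j; and the arc (x_i^n,c_j,2,2) for every clause c_j and variable x_i occurring negatively in c_j. Then φ is satisfiable if and only if there exists an ST-TOSS G'=(V,A',3) with root r of G such that |A'| ≤ 4l+m. -/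
open scoped Classical

universe u

variable {α : Type u}

/-- Vertex set of the reduction: `x_i^p`, `x_i^n`, `y_i`, clauses `c_j`, and the root `r`. -/
abbrev V17 (l m : ℕ) := Sum (Fin l) (Sum (Fin l) (Sum (Fin l) (Sum (Fin m) Unit)))

def xp17 (l m : ℕ) (i : Fin l) : V17 l m := Sum.inl i
def xn17 (l m : ℕ) (i : Fin l) : V17 l m := Sum.inr (Sum.inl i)
def y17 (l m : ℕ) (i : Fin l) : V17 l m := Sum.inr (Sum.inr (Sum.inl i))
def c17 (l m : ℕ) (j : Fin m) : V17 l m := Sum.inr (Sum.inr (Sum.inr (Sum.inl j)))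
def rt17 (l m : ℕ) : V17 l m := Sum.inr (Sum.inr (Sum.inr (Sum.inr ())))

/-- The temporal graph of the reduction of Theorem `thm:TSS_hard`: for each `α ∈ {p,n}` and
`i`, the arcs `(r,x_i^α,1,2)`, `(r,x_i^α,3,3)`, `(x_i^α,y_i,2,2)`; the arc `(x_i^p,c_j,2,2)`
when `x_i` occurs positively in `c_j`, and `(x_i^n,c_j,2,2)` when `x_i` occurs negatively in
`c_j`; the lifetime is 3. -/
noncomputable def G17 (l m : ℕ) (pos neg : Fin m → Finset (Fin l)) :
    TempGraph (V17 l m) where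
  V := Finset.univ
  A :=
    (Finset.univ.image fun i : Fin l => ((rt17 l m, xp17 l m i, 1, 2) : TArc (V17 l m)))
    ∪ (Finset.univ.image fun i : Fin l => ((rt17 l m, xn17 l m i, 1, 2) : TArc (V17 l m)))
    ∪ (Finset.univ.image fun i : Fin l => ((rt17 l m, xp17 l m i, 3, 3) : TArc (V17 l m)))
    ∪ (Finset.univ.image fun i : Fin l => ((rt17 l m, xn17 l m i, 3, 3) : TArc (V17 l m)))
    ∪ (Finset.univ.image fun i : Fin l => ((xp17 l m i, y17 l m i, 2, 2) : TArc (V17 l m)))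
    ∪ (Finset.univ.image fun i : Fin l => ((xn17 l m i, y17 l m i, 2, 2) : TArc (V17 l m)))
    ∪ (Finset.univ.biUnion fun j : Fin m =>
        ((pos j).image fun i => ((xp17 l m i, c17 l m j, 2, 2) : TArc (V17 l m)))
        ∪ ((neg j).image fun i => ((xn17 l m i, c17 l m j, 2, 2) : TArc (V17 l m))))
  τ := 3
  nonempty := ⟨rt17 l m, Finset.mem_univ _⟩
  valid := by
    intro a ha
    simp only [Finset.mem_union, Finset.mem_image, Finset.mem_biUnion, Finset.mem_univ,
      true_and] at ha
    rcases ha with ((((((⟨i, rfl⟩ | ⟨i, rfl⟩) | ⟨i, rfl⟩) | ⟨i, rfl⟩) | ⟨i, rfl⟩)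
        | ⟨i, rfl⟩) | ⟨j, (⟨i, -, rfl⟩ | ⟨i, -, rfl⟩)⟩) <;>
      exact ⟨Finset.mem_univ _, Finset.mem_univ _,
        by simp [TArc.tail, TArc.head, xp17, xn17, y17, c17, rt17],
        by norm_num [TArc.ts], by norm_num [TArc.ts, TArc.ta], by norm_num [TArc.ta]⟩

/-- The vertex of the literal over the variable `i` with sign `b`. -/
def lit17 (l m : ℕ) (b : Bool) (i : Fin l) : V17 l m := bif b then xp17 l m i else xn17 l m i

lemma lit17_inj {l m : ℕ} {b b' : Bool} {i i' : Fin l} :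
    lit17 l m b i = lit17 l m b' i' ↔ b = b' ∧ i = i' := by
  cases b <;> cases b' <;> simp [lit17, xp17, xn17]

lemma mem_G17_A {l m : ℕ} {pos neg : Fin m → Finset (Fin l)} {a : TArc (V17 l m)} :
    a ∈ (G17 l m pos neg).A ↔
      (∃ b i, a = (rt17 l m, lit17 l m b i, 1, 2)) ∨
      (∃ b i, a = (rt17 l m, lit17 l m b i, 3, 3)) ∨
      (∃ b i, a = (lit17 l m b i, y17 l m i, 2, 2)) ∨
      (∃ b i j, i ∈ (bif b then pos j else neg j) ∧ a = (lit17 l m b i, c17 l m j, 2, 2)) := by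
  simp only [G17, Finset.mem_union, Finset.mem_image, Finset.mem_biUnion, Finset.mem_univ,
    true_and, Bool.exists_bool, lit17, cond_true, cond_false, eq_comm (a := a), ← or_assoc]
  constructor
  · rintro ((((((h | h) | h) | h) | h) | h) | ⟨j, ⟨i, h⟩ | ⟨i, h⟩⟩)
    all_goals first | exact Or.inr ⟨i, j, h⟩ | exact Or.inl (Or.inr ⟨i, j, h⟩) | tauto
  · rintro (((((((h | h) | h) | h) | h) | h) | ⟨i, j, h⟩) | ⟨i, j, h⟩)
    all_goals
      first | exact Or.inr ⟨j, Or.inr ⟨i, h⟩⟩ | exact Or.inr ⟨j, Or.inl ⟨i, h⟩⟩ | tauto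

/-- A temporal walk from the root is trivial, a single arc to a literal vertex, or a slow arc
to a literal vertex followed by an arc to a variable or clause vertex. -/
lemma root_walk_cases {l m : ℕ} {pos neg : Fin m → Finset (Fin l)}
    {S : Finset (TArc (V17 l m))} (hS : S ⊆ (G17 l m pos neg).A) {v : V17 l m}
    {L : List (TArc (V17 l m))} (h : IsWalk S (rt17 l m) v L) :
    (v = rt17 l m ∧ L = []) ∨
    (∃ b i, v = lit17 l m b i ∧ ((rt17 l m, lit17 l m b i, 1, 2) : TArc (V17 l m)) ∈ S ∧
      L = [(rt17 l m, lit17 l m b i, 1, 2)]) ∨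
    (∃ b i, v = lit17 l m b i ∧ ((rt17 l m, lit17 l m b i, 3, 3) : TArc (V17 l m)) ∈ S ∧
      L = [(rt17 l m, lit17 l m b i, 3, 3)]) ∨
    (∃ b i, v = y17 l m i ∧ ((rt17 l m, lit17 l m b i, 1, 2) : TArc (V17 l m)) ∈ S ∧
      ((lit17 l m b i, y17 l m i, 2, 2) : TArc (V17 l m)) ∈ S ∧
      L = [(rt17 l m, lit17 l m b i, 1, 2), (lit17 l m b i, y17 l m i, 2, 2)]) ∨
    (∃ b i j, v = c17 l m j ∧ i ∈ (bif b then pos j else neg j) ∧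
      ((rt17 l m, lit17 l m b i, 1, 2) : TArc (V17 l m)) ∈ S ∧
      ((lit17 l m b i, c17 l m j, 2, 2) : TArc (V17 l m)) ∈ S ∧
      L = [(rt17 l m, lit17 l m b i, 1, 2), (lit17 l m b i, c17 l m j, 2, 2)]) := by
  have hlr : ∀ b i, lit17 l m b i ≠ rt17 l m := by
    intro b i; cases b <;> simp [lit17, xp17, xn17, rt17]
  have hsink : ∀ (w : V17 l m) (K : List (TArc (V17 l m))),
      ((∃ i, w = y17 l m i) ∨ ∃ j, w = c17 l m j) → IsWalk S w v K → v = w ∧ K = [] := by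
    intro w K hw hK
    cases K with
    | nil => exact ⟨hK.symm, rfl⟩
    | cons a K =>
      obtain ⟨ha, rfl, -⟩ := hK
      rcases mem_G17_A.1 (hS ha) with ⟨b, i, rfl⟩ | ⟨b, i, rfl⟩ | ⟨b, i, rfl⟩ | ⟨b, i, j, -, rfl⟩
      all_goals cases b <;> simp [TArc.tail, lit17, xp17, xn17, rt17, y17, c17] at hw
  cases L with
  | nil => exact Or.inl ⟨h.symm, rfl⟩
  | cons a L =>
    obtain ⟨ha, hta, ht, hL⟩ := h
    rcases mem_G17_A.1 (hS ha) with ⟨b, i, rfl⟩ | ⟨b, i, rfl⟩ | ⟨b, i, rfl⟩ | ⟨b, i, j, -, rfl⟩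
    · cases L with
      | nil => exact Or.inr (Or.inl ⟨b, i, hL.symm, ha, rfl⟩)
      | cons a' L =>
        obtain ⟨ha', hta', -, hL'⟩ := hL
        rcases mem_G17_A.1 (hS ha') with
          ⟨b', i', rfl⟩ | ⟨b', i', rfl⟩ | ⟨b', i', rfl⟩ | ⟨b', i', j, hi, rfl⟩
        · exact absurd hta'.symm (hlr _ _)
        · exact absurd hta'.symm (hlr _ _)
        · obtain ⟨rfl, rfl⟩ := lit17_inj.1 hta'
          obtain ⟨hv, rfl⟩ := hsink _ _ (Or.inl ⟨_, rfl⟩) hL'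
          exact Or.inr (Or.inr (Or.inr (Or.inl ⟨_, _, hv, ha, ha', rfl⟩)))
        · obtain ⟨rfl, rfl⟩ := lit17_inj.1 hta'
          obtain ⟨hv, rfl⟩ := hsink _ _ (Or.inr ⟨_, rfl⟩) hL'
          exact Or.inr (Or.inr (Or.inr (Or.inr ⟨_, _, _, hv, hi, ha, ha', rfl⟩)))
    · cases L with
      | nil => exact Or.inr (Or.inr (Or.inl ⟨b, i, hL.symm, ha, rfl⟩))
      | cons a' L =>
        obtain ⟨ha', hta', -, hL'⟩ := hL
        have h3 : 3 ≤ TArc.ts a' := ht a' rfl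
        rcases mem_G17_A.1 (hS ha') with
          ⟨b', i', rfl⟩ | ⟨b', i', rfl⟩ | ⟨b', i', rfl⟩ | ⟨b', i', j, hi, rfl⟩
        · exact absurd hta'.symm (hlr _ _)
        · exact absurd hta'.symm (hlr _ _)
        · exact absurd h3 (by simp [TArc.ts])
        · exact absurd h3 (by simp [TArc.ts])
    · exact absurd hta (hlr _ _)
    · exact absurd hta (hlr _ _)

lemma V17_cases {l m : ℕ} (v : V17 l m) :
    v = rt17 l m ∨ (∃ b i, v = lit17 l m b i) ∨ (∃ i, v = y17 l m i) ∨ ∃ j, v = c17 l m j := by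
  rcases v with i | i | i | j | u
  · exact Or.inr (Or.inl ⟨true, i, rfl⟩)
  · exact Or.inr (Or.inl ⟨false, i, rfl⟩)
  · exact Or.inr (Or.inr (Or.inl ⟨i, rfl⟩))
  · exact Or.inr (Or.inr (Or.inr ⟨j, rfl⟩))
  · exact Or.inl rfl

/-- The arcs of the spanning subgraph given by a sign `σ i` for every variable and a literal
`(b j, d j)` for every clause: all fast arcs, the slow arcs to the chosen literals, the arcs
from these to the variable vertices, and one arc into every clause vertex. -/
def spanArc17 {l m : ℕ} (σ : Fin l → Bool) (b : Fin m → Bool) (d : Fin m → Fin l) :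
    (Bool × Fin l) ⊕ Fin l ⊕ Fin l ⊕ Fin m → TArc (V17 l m)
  | .inl (s, i) => (rt17 l m, lit17 l m s i, 3, 3)
  | .inr (.inl i) => (rt17 l m, lit17 l m (σ i) i, 1, 2)
  | .inr (.inr (.inl i)) => (lit17 l m (σ i) i, y17 l m i, 2, 2)
  | .inr (.inr (.inr j)) => (lit17 l m (b j) (d j), c17 l m j, 2, 2)

lemma spanArc17_injective {l m : ℕ} (σ : Fin l → Bool) (b : Fin m → Bool)
    (d : Fin m → Fin l) : Function.Injective (spanArc17 σ b d) := by
  rintro (⟨s, i⟩ | i | i | j) (⟨s', i'⟩ | i' | i' | j') h <;>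
    simp_all [spanArc17, lit17_inj, y17, c17]

lemma card_spanArc17_index (l m : ℕ) :
    Fintype.card ((Bool × Fin l) ⊕ Fin l ⊕ Fin l ⊕ Fin m) = 4 * l + m := by
  simp; ring

lemma exists_toss_of_satisfiable {l m : ℕ} {pos neg : Fin m → Finset (Fin l)}
    (h : Satisfiable l m pos neg) :
    ∃ G' : TempGraph (V17 l m),
      IsDTOSS DistKind.ST (G17 l m pos neg) G' (rt17 l m) ∧ G'.τ = 3 ∧
        G'.A.card ≤ 4 * l + m := by
  obtain ⟨σ, hσ⟩ := h
  have hd : ∀ j, ∃ i, i ∈ (bif σ i then pos j else neg j) := by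
    intro j
    rcases hσ j with ⟨i, hi, hs⟩ | ⟨i, hi, hs⟩ <;> exact ⟨i, by simpa [hs] using hi⟩
  choose d hd using hd
  set S := Finset.univ.image (spanArc17 σ (fun j => σ (d j)) d) with hSdef
  have hmem : ∀ k, spanArc17 σ (fun j => σ (d j)) d k ∈ S := fun k =>
    Finset.mem_image_of_mem _ (Finset.mem_univ k)
  have hsub : S ⊆ (G17 l m pos neg).A := by
    intro a ha
    obtain ⟨k, -, rfl⟩ := Finset.mem_image.1 ha
    rw [mem_G17_A]
    rcases k with ⟨s, i⟩ | i | i | j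
    · exact Or.inr (Or.inl ⟨_, _, rfl⟩)
    · exact Or.inl ⟨_, _, rfl⟩
    · exact Or.inr (Or.inr (Or.inl ⟨_, _, rfl⟩))
    · exact Or.inr (Or.inr (Or.inr ⟨_, _, _, hd j, rfl⟩))
  have hone : ∀ v, ((∃ i, v = y17 l m i) ∨ ∃ j, v = c17 l m j) → ∀ L,
      IsWalk (G17 l m pos neg).A (rt17 l m) v L → 1 ≤ ttW L := by
    intro v hv L hL
    rcases root_walk_cases subset_rfl hL with ⟨rfl, -⟩ | ⟨b, i, rfl, -⟩ | ⟨b, i, rfl, -⟩ |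
      ⟨b, i, -, -, -, rfl⟩ | ⟨b, i, j, -, -, -, -, rfl⟩
    · simp [rt17, y17, c17] at hv
    · cases b <;> simp [lit17, xp17, xn17, y17, c17] at hv
    · cases b <;> simp [lit17, xp17, xn17, y17, c17] at hv
    · simp [ttW, TArc.el, TArc.ta, TArc.ts]
    · simp [ttW, TArc.el, TArc.ta, TArc.ts]
  have hwalk : ∀ v, ∃ L, IsWalk S (rt17 l m) v L ∧
      ∀ L', IsWalk (G17 l m pos neg).A (rt17 l m) v L' → ttW L ≤ ttW L' := by
    intro v
    rcases V17_cases v with rfl | ⟨b, i, rfl⟩ | ⟨i, rfl⟩ | ⟨j, rfl⟩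
    · exact ⟨[], rfl, by simp [ttW]⟩
    · exact ⟨[(rt17 l m, lit17 l m b i, 3, 3)],
        ⟨hmem (.inl (b, i)), rfl, by simp, rfl⟩, by simp [ttW, TArc.el, TArc.ta, TArc.ts]⟩
    · refine ⟨[(rt17 l m, lit17 l m (σ i) i, 1, 2), (lit17 l m (σ i) i, y17 l m i, 2, 2)],
        ⟨hmem (.inr (.inl i)), rfl, by simp [TArc.ta, TArc.ts],
          hmem (.inr (.inr (.inl i))), rfl, by simp, rfl⟩, fun L' hL' => ?_⟩
      exact hone _ (Or.inl ⟨_, rfl⟩) L' hL'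
    · refine ⟨[(rt17 l m, lit17 l m (σ (d j)) (d j), 1, 2),
          (lit17 l m (σ (d j)) (d j), c17 l m j, 2, 2)],
        ⟨hmem (.inr (.inl (d j))), rfl, by simp [TArc.ta, TArc.ts],
          hmem (.inr (.inr (.inr j))), rfl, by simp, rfl⟩, fun L' hL' => ?_⟩
      exact hone _ (Or.inr ⟨_, rfl⟩) L' hL'
  have hmono : ∀ (L : List (TArc (V17 l m))) u v, IsWalk S u v L →
      IsWalk (G17 l m pos neg).A u v L := by
    intro L
    induction L with
    | nil => exact fun u v h => h
    | cons a L ih => exact fun u v h => ⟨hsub h.1, h.2.1, h.2.2.1, ih _ _ h.2.2.2⟩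
  refine ⟨⟨Finset.univ, S, 3, ⟨rt17 l m, Finset.mem_univ _⟩,
    fun a ha => (G17 l m pos neg).valid a (hsub ha)⟩,
    ⟨⟨subset_rfl, hsub, le_rfl⟩, rfl, fun v _ => ?_⟩, rfl, ?_⟩
  · obtain ⟨L, hL, hmin⟩ := hwalk v
    exact ⟨L, hL, hmono _ _ _ hL, by simpa [wval] using hmin⟩
  · exact Finset.card_image_le.trans (card_spanArc17_index l m).le

lemma satisfiable_of_toss {l m : ℕ} {pos neg : Fin m → Finset (Fin l)}
    {G' : TempGraph (V17 l m)}
    (hG : IsDTOSS DistKind.ST (G17 l m pos neg) G' (rt17 l m))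
    (hcard : G'.A.card ≤ 4 * l + m) : Satisfiable l m pos neg := by
  obtain ⟨⟨-, hsub, -⟩, -, hreal⟩ := hG
  have hfast : ∀ b i, ((rt17 l m, lit17 l m b i, 3, 3) : TArc (V17 l m)) ∈ G'.A := by
    intro b i
    obtain ⟨L, hL, -, hmin⟩ := hreal (lit17 l m b i) (Finset.mem_univ _)
    have hle := hmin [(rt17 l m, lit17 l m b i, 3, 3)]
      ⟨mem_G17_A.2 (Or.inr (Or.inl ⟨_, _, rfl⟩)), rfl, by simp, rfl⟩
    rcases root_walk_cases hsub hL with ⟨h, -⟩ | ⟨b', i', -, -, rfl⟩ | ⟨b', i', h, h', -⟩ |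
      ⟨b', i', h, -⟩ | ⟨b', i', j, h, -⟩
    · cases b <;> simp [lit17, xp17, xn17, rt17] at h
    · simp [wval, ttW, TArc.el, TArc.ta, TArc.ts] at hle
    · rwa [h]
    · cases b <;> simp [lit17, xp17, xn17, y17] at h
    · cases b <;> simp [lit17, xp17, xn17, c17] at h
  have hvar : ∀ i, ∃ b, ((rt17 l m, lit17 l m b i, 1, 2) : TArc (V17 l m)) ∈ G'.A ∧
      ((lit17 l m b i, y17 l m i, 2, 2) : TArc (V17 l m)) ∈ G'.A := by
    intro i
    obtain ⟨L, hL, -⟩ := hreal (y17 l m i) (Finset.mem_univ _)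
    rcases root_walk_cases hsub hL with ⟨h, -⟩ | ⟨b', i', h, -⟩ | ⟨b', i', h, -⟩ |
      ⟨b', i', h, h1, h2, -⟩ | ⟨b', i', j, h, -⟩
    · simp [y17, rt17] at h
    · cases b' <;> simp [lit17, xp17, xn17, y17] at h
    · cases b' <;> simp [lit17, xp17, xn17, y17] at h
    · obtain rfl : i = i' := by simpa [y17] using h
      exact ⟨b', h1, h2⟩
    · simp [y17, c17] at h
  have hclause : ∀ j, ∃ b i, i ∈ (bif b then pos j else neg j) ∧
      ((rt17 l m, lit17 l m b i, 1, 2) : TArc (V17 l m)) ∈ G'.A ∧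
      ((lit17 l m b i, c17 l m j, 2, 2) : TArc (V17 l m)) ∈ G'.A := by
    intro j
    obtain ⟨L, hL, -⟩ := hreal (c17 l m j) (Finset.mem_univ _)
    rcases root_walk_cases hsub hL with ⟨h, -⟩ | ⟨b', i', h, -⟩ | ⟨b', i', h, -⟩ |
      ⟨b', i', h, -⟩ | ⟨b', i', j', h, hi, h1, h2, -⟩
    · simp [c17, rt17] at h
    · cases b' <;> simp [lit17, xp17, xn17, c17] at h
    · cases b' <;> simp [lit17, xp17, xn17, c17] at h
    · simp [y17, c17] at h
    · obtain rfl : j = j' := by simpa [c17] using h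
      exact ⟨b', i', hi, h1, h2⟩
  choose σ hσr hσy using hvar
  choose b d hbd hbr hbc using hclause
  have himage : Finset.univ.image (spanArc17 σ b d) = G'.A := by
    refine Finset.eq_of_subset_of_card_le ?_ ?_
    · intro a ha
      obtain ⟨k, -, rfl⟩ := Finset.mem_image.1 ha
      rcases k with ⟨s, i⟩ | i | i | j
      exacts [hfast s i, hσr i, hσy i, hbc j]
    · rw [Finset.card_image_of_injective _ (spanArc17_injective σ b d), Finset.card_univ,
        card_spanArc17_index]
      exact hcard
  have hsign : ∀ j, σ (d j) = b j := by
    intro j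
    have hj := hbr j
    rw [← himage] at hj
    obtain ⟨k, -, hk⟩ := Finset.mem_image.1 hj
    rcases k with ⟨s, i⟩ | i | i | j'
    · simp [spanArc17] at hk
    · simp only [spanArc17, Prod.mk.injEq, lit17_inj] at hk
      obtain ⟨-, ⟨h1, h2⟩, -⟩ := hk
      rw [← h2, h1]
    · simp [spanArc17] at hk
    · simp [spanArc17] at hk
  refine ⟨σ, fun j => ?_⟩
  have hj := hbd j
  cases hb : b j
  · exact Or.inr ⟨d j, by simpa [hb] using hj, by rw [hsign, hb]⟩
  · exact Or.inl ⟨d j, by simpa [hb] using hj, by rw [hsign, hb]⟩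

/-- Theorem `thm:TSS_hard`: the CNF formula is satisfiable iff the
reduction graph has an ST-TOSS `G' = (V, A', 3)` with root `r` such that `|A'| ≤ 4l + m`. -/
theorem stmt_17 (l m : ℕ) (pos neg : Fin m → Finset (Fin l))
    (hne : ∀ j, (pos j ∪ neg j).Nonempty) :
    Satisfiable l m pos neg ↔
      ∃ G' : TempGraph (V17 l m),
        IsDTOSS DistKind.ST (G17 l m pos neg) G' (rt17 l m) ∧ G'.τ = 3 ∧
          G'.A.card ≤ 4 * l + m :=
  ⟨exists_toss_of_satisfiable, fun ⟨_, hG, _, hcard⟩ => satisfiable_of_toss hG hcard⟩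
end
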